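/- arXiv:2106.05646 — 3 statements merged into one kernel-verified Lean document; each statement's English description precedes it below -/
import Mathlib

section
/- Let {τ_i : i ∈ I} be a nonempty family of Hausdorff topologies on a set X, all of which have the same compact subsets of X. Then all the τ_i induce the same subspace topology on each such common compact subset. Moreover, the supremum topology τ₁ = sup_{i∈I} τ_i again has the same compact subsets as each τ_i, and τ₁ induces the same subspace topology as each τ_i on every compact subset. -/
open Topology

/-!
In a Hausdorff space, the closed subsets of a compact subspace `K` are exactly the subsets of `K`
that are compact in the ambient space (`isClosed_subtype_iff_isCompact_image`). So the subspace
topology on `K` is determined by the family of compact sets, and all the `τ i` induce the same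
topology on `K`. Taking induced topologies commutes with `⨅`, so `⨅ j, τ j` induces that common
topology too; and since compactness of `K` only depends on its subspace topology, `K` is compact
for `⨅ j, τ j`. The converse holds because `⨅ j, τ j` is finer than each `τ i`.
-/

theorem isClosed_subtype_iff_isCompact_image {X : Type*} [TopologicalSpace X] [T2Space X]
    {K : Set X} (hK : IsCompact K) (C : Set K) :
    IsClosed C ↔ IsCompact (Subtype.val '' C) := by
  have : CompactSpace K := isCompact_iff_compactSpace.mp hK
  rw [← Subtype.isCompact_iff]
  exact ⟨fun h => h.isCompact, fun h => h.isClosed⟩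

/-- Let `{τ i}` be a nonempty family of Hausdorff topologies on a set `X`,
all with the same compact subsets.  Then all the `τ i` induce the same subspace topology on
each such compact subset; moreover the supremum topology (the coarsest topology finer than
every `τ i`, which in Mathlib's order on `TopologicalSpace X` is `⨅ i, τ i`, since `≤` means
"finer") has the same compact subsets as each `τ i`, and induces the same subspace topology
as each `τ i` on every compact subset. -/
theorem sup_of_topologies_with_same_compacts {X : Type*} {I : Type*} [Nonempty I]
    (τ : I → TopologicalSpace X)
    (hT2 : ∀ i, @T2Space X (τ i))
    (hsame : ∀ i j, ∀ K : Set X, @IsCompact X (τ i) K ↔ @IsCompact X (τ j) K) :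
    (∀ i j, ∀ K : Set X, @IsCompact X (τ i) K →
      TopologicalSpace.induced (Subtype.val : K → X) (τ i) =
        TopologicalSpace.induced (Subtype.val : K → X) (τ j)) ∧
    (∀ i, ∀ K : Set X, @IsCompact X (⨅ j, τ j) K ↔ @IsCompact X (τ i) K) ∧
    (∀ i, ∀ K : Set X, @IsCompact X (τ i) K →
      TopologicalSpace.induced (Subtype.val : K → X) (⨅ j, τ j) =
        TopologicalSpace.induced (Subtype.val : K → X) (τ i)) := by
  have h1 : ∀ i j, ∀ K : Set X, @IsCompact X (τ i) K →
      TopologicalSpace.induced (Subtype.val : K → X) (τ i) =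
        TopologicalSpace.induced (Subtype.val : K → X) (τ j) := by
    intro i j K hK
    refine TopologicalSpace.ext_isClosed fun C => ?_
    exact (@isClosed_subtype_iff_isCompact_image X (τ i) (hT2 i) K hK C).trans
      ((hsame i j _).trans
        (@isClosed_subtype_iff_isCompact_image X (τ j) (hT2 j) K ((hsame i j K).mp hK) C).symm)
  have h3 : ∀ i, ∀ K : Set X, @IsCompact X (τ i) K →
      TopologicalSpace.induced (Subtype.val : K → X) (⨅ j, τ j) =
        TopologicalSpace.induced (Subtype.val : K → X) (τ i) := by
    intro i K hK
    rw [induced_iInf, iInf_congr fun j => (h1 i j K hK).symm, iInf_const]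
  refine ⟨h1, fun i K => ⟨fun hK => ?_, fun hK => ?_⟩, h3⟩
  · have h := @IsCompact.image X X (⨅ j, τ j) (τ i) K id hK
      (continuous_id_iff_le.mpr (iInf_le τ i))
    rwa [Set.image_id] at h
  · have hc := (@isCompact_iff_compactSpace X (τ i) K).mp hK
    refine (@isCompact_iff_compactSpace X (⨅ j, τ j) K).mpr ?_
    change @CompactSpace K (TopologicalSpace.induced Subtype.val (⨅ j, τ j))
    rw [h3 i K hK]
    exact hc
end

section
/- Let E be an infinite-dimensional real Banach space equipped with its weak topology σ(E,E*). Then (E,σ(E,E*)) is a k_𝕋-group: every character χ : E → 𝕋 whose restriction to each σ(E,E*)-compact subset of E is continuous (for the subspace topology of σ(E,E*)) is itself σ(E,E*)-continuous. -/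
/-!
Every norm-compact set is weakly compact, so a character `χ` that is weakly continuous on weakly
compact sets is norm-continuous on norm-compact sets; as a metrizable space is compactly
coherent, `χ` is norm-continuous (`continuous_of_weakLinTop_compacts`). Since `E` is contractible,
`χ` lifts through the covering `Circle.exp : ℝ → Circle` to a continuous function `F : E → ℝ`
with `F 0 = 0`, and uniqueness of lifts makes `F` additive, hence a continuous linear functional
(`exists_exp_lift`). Thus `χ = exp ∘ F` is weakly continuous.
-/

open Topology

/-- The weak topology `σ(E,E*)` on a real normed space `E`: the initial topology induced by
all (norm-)continuous linear functionals `E →L[ℝ] ℝ`. -/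
def weakLinTop (E : Type*) [NormedAddCommGroup E] [NormedSpace ℝ E] : TopologicalSpace E :=
  ⨅ f : E →L[ℝ] ℝ, TopologicalSpace.induced (⇑f) inferInstance

theorem norm_le_weakLinTop (E : Type*) [NormedAddCommGroup E] [NormedSpace ℝ E] :
    (inferInstance : TopologicalSpace E) ≤ weakLinTop E :=
  le_iInf fun f => f.continuous.le_induced

theorem continuous_of_weakLinTop_compacts {E : Type*} [NormedAddCommGroup E] [NormedSpace ℝ E]
    (χ : E → Circle)
    (h : ∀ K : Set E, @IsCompact E (weakLinTop E) K →
        @ContinuousOn E Circle (weakLinTop E) inferInstance χ K) :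
    Continuous χ := by
  have hid : @Continuous E E _ (weakLinTop E) id := continuous_id_iff_le.2 (norm_le_weakLinTop E)
  refine CompactlyCoherentSpace.isCoherentWith.continuous_iff.2 fun K hK => ?_
  have hKw : @IsCompact E (weakLinTop E) K := by
    have := @IsCompact.image E E _ (weakLinTop E) K id hK hid
    rwa [Set.image_id] at this
  exact @ContinuousOn.comp E E Circle _ (weakLinTop E) _ id K χ K (h K hKw)
    (@Continuous.continuousOn E E _ (weakLinTop E) id K hid) (Set.mapsTo_id K)

/-- A norm-continuous character of a real normed space is the exponential of a continuous
linear functional. -/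
theorem exists_exp_lift {E : Type*} [NormedAddCommGroup E] [NormedSpace ℝ E]
    (χ : AddChar E Circle) (hχ : Continuous χ) :
    ∃ f : E →L[ℝ] ℝ, ∀ x, χ x = Circle.exp (f x) := by
  obtain ⟨F, ⟨hF0, hF⟩, -⟩ := Circle.isCoveringMap_exp.existsUnique_continuousMap_lifts
    (⟨χ, hχ⟩ : C(E, Circle)) 0 0 (by simp)
  have hF' : ∀ x, Circle.exp (F x) = χ x := fun x => congrFun hF x
  -- Both `F (x + y)` and `F x + F y` lift `(x, y) ↦ χ (x + y)` and vanish at the origin.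
  have hadd : (fun p : E × E => F (p.1 + p.2)) = fun p : E × E => F p.1 + F p.2 := by
    refine Circle.isCoveringMap_exp.eq_of_comp_eq (by fun_prop) (by fun_prop) ?_ (0, 0)
      (by simp [hF0])
    funext p
    simp [hF', AddChar.map_add_eq_mul]
  let G : E →+ ℝ := ⟨⟨F, hF0⟩, fun x y => congrFun hadd (x, y)⟩
  exact ⟨G.toRealLinearMap F.continuous, fun x => (hF' x).symm⟩

/-- For an infinite-dimensional real Banach space `E`, the group
`(E, σ(E,E*))` is a `k_𝕋`-group: every character `χ : E → 𝕋` whose restriction to each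
`σ(E,E*)`-compact subset of `E` is continuous (equivalently, which is `σ(E,E*)`-continuous
on every `σ(E,E*)`-compact set) is itself `σ(E,E*)`-continuous. -/
theorem weak_banach_is_kT_group (E : Type*) [NormedAddCommGroup E] [NormedSpace ℝ E]
    [CompleteSpace E] (hinf : ¬ FiniteDimensional ℝ E) :
    ∀ χ : AddChar E Circle,
      (∀ K : Set E, @IsCompact E (weakLinTop E) K →
        @ContinuousOn E Circle (weakLinTop E) inferInstance χ K) →
      @Continuous E Circle (weakLinTop E) inferInstance χ := by
  intro χ h
  obtain ⟨f, hf⟩ := exists_exp_lift χ (continuous_of_weakLinTop_compacts χ h)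
  have hfw : @Continuous E ℝ (weakLinTop E) _ f :=
    continuous_iff_le_induced.2 (iInf_le _ f)
  have hχ : (χ : E → Circle) = Circle.exp ∘ f := funext hf
  rw [hχ]
  exact @Continuous.comp E ℝ Circle (weakLinTop E) _ _ f Circle.exp Circle.exp.continuous hfw
end

section
/- The product space ℝ^ℝ = ∏_{r∈ℝ} ℝ, endowed with the product topology π, is not a k-space: there exists a subset A ⊆ ℝ^ℝ which is not π-closed but such that A ∩ K is closed in K for every π-compact subset K ⊆ ℝ^ℝ. -/
/-!
Let `almostConst n` be the set of functions that take the value `n` at all but at most `n` points.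
Each such set is closed, and the witness is the union `A` of these sets over `n ≥ 1`.

The zero function is a limit point of `A` outside `A`: for a finite set `F` of coordinates, the
function that is `0` on `F` and `|F| + 1` elsewhere lies in `A`. On the other hand, a compact `K`
meets only finitely many `almostConst n`, so that `A ∩ K` is a finite union of closed sets.
Otherwise pick `fₙ ∈ K ∩ almostConst n` for infinitely many `n`; the exceptional sets `{fₙ ≠ n}` are
finite, so their union is countable and misses some real `r`. Then `fₙ r = n` for infinitely many
`n`, although the projection of `K` to the coordinate `r` is bounded.
-/

open Topology

/-- The functions equal to `n` at all but at most `n` points. This is phrased as: every set of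
`n + 1` points contains one where the value is `n`, which exhibits the set as an intersection of
closed sets. -/
def almostConst (n : ℕ) : Set (ℝ → ℝ) :=
  {f | ∀ S : Finset ℝ, S.card = n + 1 → ∃ r ∈ S, f r = n}

lemma isClosed_almostConst (n : ℕ) : IsClosed (almostConst n) := by
  have h : almostConst n =
      ⋂ (S : Finset ℝ) (_ : S.card = n + 1), ⋃ r ∈ S, {f : ℝ → ℝ | f r = n} := by
    ext f
    simp [almostConst]
  rw [h]
  refine isClosed_iInter fun S => isClosed_iInter fun _ => ?_
  exact S.finite_toSet.isClosed_biUnion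
    fun r _ => isClosed_eq (continuous_apply r) continuous_const

lemma finite_ne_of_mem_almostConst {n : ℕ} {f : ℝ → ℝ} (hf : f ∈ almostConst n) :
    {r | f r ≠ n}.Finite := by
  by_contra h
  obtain ⟨S, hS, hcard⟩ := Set.Infinite.exists_subset_card_eq h (n + 1)
  obtain ⟨r, hr, hfr⟩ := hf S hcard
  exact hS hr hfr

/-- A compact set meets only finitely many of the sets `almostConst n`. -/
lemma finite_meets_almostConst {K : Set (ℝ → ℝ)} (hK : IsCompact K) :
    {n : ℕ | (K ∩ almostConst n).Nonempty}.Finite := by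
  classical
  have hex : ∀ n : ℕ, ∃ f : ℝ → ℝ, (K ∩ almostConst n).Nonempty → f ∈ K ∩ almostConst n := by
    intro n
    by_cases h : (K ∩ almostConst n).Nonempty
    · exact ⟨h.some, fun _ => h.some_mem⟩
    · exact ⟨0, fun h' => absurd h' h⟩
  choose f hf using hex
  have hcount : (⋃ n ∈ {n : ℕ | (K ∩ almostConst n).Nonempty}, {r | f n r ≠ n}).Countable :=
    (Set.to_countable _).biUnion
      fun n hn => (finite_ne_of_mem_almostConst (hf n hn).2).countable
  -- Uncountability of the index set gives a coordinate outside all the exceptional sets.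
  obtain ⟨r, hr⟩ : ∃ r : ℝ, r ∉ ⋃ n ∈ {n : ℕ | (K ∩ almostConst n).Nonempty},
      {r | f n r ≠ n} := by
    by_contra! h
    exact Cardinal.not_countable_real (hcount.mono fun x _ => h x)
  obtain ⟨b, hb⟩ := (hK.image (continuous_apply r)).bddAbove
  refine (Set.finite_Iic ⌈b⌉₊).subset fun n hn => ?_
  have hfr : f n r = n := by
    by_contra hne
    exact hr (Set.mem_biUnion hn hne)
  have hle : (n : ℝ) ≤ b := hfr ▸ hb ⟨f n, (hf n hn).1, rfl⟩
  exact_mod_cast hle.trans (Nat.le_ceil b)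

/-- The product `ℝ^ℝ` with the product topology is not a `k`-space:
there is a subset `A ⊆ ℝ^ℝ` which is not closed, yet `A ∩ K` is closed in `K` for every
compact `K ⊆ ℝ^ℝ`. -/
theorem rr_not_kspace :
    ∃ A : Set (ℝ → ℝ), ¬ IsClosed A ∧
      ∀ K : Set (ℝ → ℝ), IsCompact K →
        IsClosed {k : K | (k : ℝ → ℝ) ∈ A} := by
  classical
  refine ⟨{f | ∃ n : ℕ, 1 ≤ n ∧ f ∈ almostConst n}, fun hA => ?_, fun K hK => ?_⟩
  · have h0 : (0 : ℝ → ℝ) ∉ {f | ∃ n : ℕ, 1 ≤ n ∧ f ∈ almostConst n} := by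
      rintro ⟨n, hn, h⟩
      obtain ⟨S, hS⟩ := Infinite.exists_subset_card_eq ℝ (n + 1)
      obtain ⟨r, -, hr⟩ := h S hS
      have : n = 0 := by simpa [eq_comm] using hr
      omega
    obtain ⟨F, u, hu, hsub⟩ := isOpen_pi_iff.1 hA.isOpen_compl 0 h0
    -- The value off `F` is `|F| + 1` rather than `|F|`, to be positive even when `F` is empty.
    refine hsub (a := fun r => if r ∈ F then 0 else ((F.card + 1 : ℕ) : ℝ)) ?_
      ⟨F.card + 1, by omega, fun S hS => ?_⟩
    · intro r hr
      have hr' : r ∈ F := hr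
      simpa [hr'] using (hu r hr').2
    · obtain ⟨r, hrS, hrF⟩ := Finset.exists_mem_notMem_of_card_lt_card (s := F) (t := S) (by omega)
      exact ⟨r, hrS, by simp [hrF]⟩
  · have h : {k : K | (k : ℝ → ℝ) ∈ {f | ∃ n : ℕ, 1 ≤ n ∧ f ∈ almostConst n}} =
        ⋃ n ∈ {n : ℕ | (K ∩ almostConst n).Nonempty} ∩ {n | 1 ≤ n},
          ((↑) : K → ℝ → ℝ) ⁻¹' almostConst n := by
      ext k
      simp only [Set.mem_ofPred_eq, Set.mem_iUnion, Set.mem_inter_iff, Set.mem_preimage]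
      constructor
      · rintro ⟨n, hn, hk⟩
        exact ⟨n, ⟨⟨k, k.2, hk⟩, hn⟩, hk⟩
      · rintro ⟨n, ⟨-, hn⟩, hk⟩
        exact ⟨n, hn, hk⟩
    rw [h]
    exact ((finite_meets_almostConst hK).subset Set.inter_subset_left).isClosed_biUnion
      fun n _ => (isClosed_almostConst n).preimage continuous_subtype_val
end
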